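/- Let f ∈ L¹(ℝ), 1 < p < ∞, 1/p + 1/q = 1, α, β > 0 with (αp)^{1/p}(βq)^{1/q} > 1. Suppose |f(x)| ≤ C e^{-α|x|^p} for all x and |f̃(λ)| ≤ C e^{-β|λ|^q} for all λ. Then f = 0 almost everywhere. -/

import Mathlib

open MeasureTheory

/-!
Write `γ = a⁻¹ ^ q / q`, where by the assumption on `α` and `β` one can choose `a > 0` with
`a ^ p / p < α` and `γ < β`. Young's inequality `|z t| ≤ a ^ p |t| ^ p / p + γ |z| ^ q` then shows
that the Fourier transform of `f` extends to an entire function of growth `exp (γ |z| ^ q)`, which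
decays like `exp (-β x ^ q)` on the positive reals.

No nonzero entire function can do this. The substitution `z = s ^ (1 / q)` opens the sector of angle
`π / q` below the positive real axis to a half-plane, on whose boundary the function grows at rate
at most `γ` along one ray and decays at rate `β > γ` along the other. Multiplying by an exponential
balances the two rates to a decay at the same positive rate on the whole imaginary axis. This leaves
room for a damping factor with superexponential decay on the positive real axis, and the
Phragmén–Lindelöf principle forces the function to vanish.
-/

open Asymptotics Filter Set Topology
open scoped FourierTransform ContDiff SchwartzMap Real

variable {E : Type*} [NormedAddCommGroup E] [NormedSpace ℂ E]

/-- The damping factor `(s + 1) ^ (-ε (s + 1))`: on the positive real axis it decays faster than any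
exponential, while on the imaginary axis it costs only `exp (ε π |y| / 2)`. The shift by `1` keeps
the logarithm holomorphic on the closed right half-plane. -/
noncomputable def superexpDamping (ε : ℝ) (s : ℂ) : ℂ :=
  Complex.exp (-(ε * ((s + 1) * Complex.log (s + 1))))

lemma norm_superexpDamping (ε : ℝ) (s : ℂ) :
    ‖superexpDamping ε s‖ =
      Real.exp (ε * (s.im * (s + 1).arg - (s.re + 1) * Real.log ‖s + 1‖)) := by
  rw [superexpDamping, Complex.norm_exp]
  congr 1
  simp only [Complex.neg_re, Complex.mul_re, Complex.mul_im, Complex.add_re, Complex.add_im,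
    Complex.ofReal_re, Complex.ofReal_im, Complex.one_re, Complex.one_im, Complex.log_re,
    Complex.log_im, add_zero, zero_mul, sub_zero]
  ring

lemma norm_superexpDamping_le {ε : ℝ} (hε : 0 ≤ ε) {s : ℂ} (hs : 0 ≤ s.re) :
    ‖superexpDamping ε s‖ ≤ Real.exp (ε * (π / 2) * |s.im|) := by
  have hre : 1 ≤ (s + 1).re := by simpa using hs
  have harg : s.im * (s + 1).arg ≤ π / 2 * |s.im| :=
    calc s.im * (s + 1).arg ≤ |(s + 1).arg| * |s.im| := by
          rw [← abs_mul, mul_comm]; exact le_abs_self _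
      _ ≤ π / 2 * |s.im| := by
          gcongr
          exact Complex.abs_arg_le_pi_div_two_iff.2 (zero_le_one.trans hre)
  have hlog : 0 ≤ (s.re + 1) * Real.log ‖s + 1‖ :=
    mul_nonneg (by linarith) (Real.log_nonneg (hre.trans (Complex.re_le_norm _)))
  rw [norm_superexpDamping, mul_assoc]
  gcongr
  linarith

lemma diffContOnCl_superexpDamping (ε : ℝ) :
    DiffContOnCl ℂ (superexpDamping ε) {s | 0 < s.re} := by
  refine DifferentiableOn.diffContOnCl fun s hs => DifferentiableAt.differentiableWithinAt ?_
  rw [Complex.closure_setOfPred_lt_re] at hs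
  have hlog : DifferentiableAt ℂ (fun s : ℂ => Complex.log (s + 1)) s :=
    DifferentiableAt.clog (by fun_prop) (.inl (by simpa using add_pos_of_nonneg_of_pos hs one_pos))
  unfold superexpDamping
  fun_prop

lemma superpolynomialDecay_exp_superexpDamping {ε : ℝ} (hε : 0 < ε) :
    SuperpolynomialDecay atTop Real.exp fun x : ℝ => ‖superexpDamping ε x‖ := by
  intro n
  refine squeeze_zero' (.of_forall fun x => by positivity) ?_
    Real.tendsto_exp_neg_atTop_nhds_zero
  filter_upwards [eventually_ge_atTop 0,
    Real.tendsto_log_atTop.eventually_ge_atTop ((n + 1) / ε)] with x hx hlog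
  have hx1 : (x : ℂ) + 1 = (x + 1 : ℝ) := by push_cast; rfl
  have hlog' : n + 1 ≤ ε * Real.log (x + 1) := by
    rcases hx.eq_or_lt with rfl | hx0
    · rw [Real.log_zero, div_le_iff₀ hε, zero_mul] at hlog
      linarith [n.cast_nonneg (α := ℝ)]
    · calc (n + 1 : ℝ) ≤ Real.log x * ε := (div_le_iff₀ hε).1 hlog
        _ ≤ ε * Real.log (x + 1) := by rw [mul_comm]; gcongr; linarith
  rw [norm_superexpDamping, hx1, Complex.norm_of_nonneg (by linarith), ← Real.exp_nat_mul,
    ← Real.exp_add]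
  simp only [Complex.ofReal_re, Complex.ofReal_im, zero_mul, zero_sub]
  gcongr
  nlinarith

lemma mul_le_mul_exp_add {u v C x y : ℝ} (hv₀ : 0 ≤ v) (hu : u ≤ Real.exp x)
    (hv : v ≤ C * Real.exp y) : u * v ≤ C * Real.exp (x + y) :=
  calc u * v ≤ Real.exp x * (C * Real.exp y) := mul_le_mul hu hv hv₀ (Real.exp_pos x).le
    _ = C * Real.exp (x + y) := by rw [Real.exp_add, mul_left_comm]

theorem eqOn_zero_of_exp_decay_on_imaginary_axis {f : ℂ → E} {B C D δ : ℝ}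
    (hf : DiffContOnCl ℂ f {s | 0 < s.re})
    (hgrowth : ∀ s : ℂ, 0 ≤ s.re → ‖f s‖ ≤ C * Real.exp (B * ‖s‖)) (hδ : 0 < δ)
    (hdecay : ∀ y : ℝ, ‖f (y * Complex.I)‖ ≤ D * Real.exp (-(δ * |y|))) :
    EqOn f 0 {s | 0 ≤ s.re} := by
  set ε := δ / (π / 2)
  have hε : 0 < ε := by positivity
  have hεδ : ε * (π / 2) = δ := div_mul_cancel₀ δ (by positivity)
  have hdamp (s : ℂ) (hs : 0 ≤ s.re) : ‖superexpDamping ε s‖ ≤ Real.exp (δ * |s.im|) :=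
    hεδ ▸ norm_superexpDamping_le hε.le hs
  have hC : 0 ≤ C := nonneg_of_mul_nonneg_left
    ((norm_nonneg _).trans (hgrowth 0 le_rfl)) (Real.exp_pos _)
  suffices EqOn (fun s => superexpDamping ε s • f s) 0 {s | 0 ≤ s.re} from fun s hs =>
    (smul_eq_zero.1 (this hs)).resolve_left (Complex.exp_ne_zero _)
  refine PhragmenLindelof.eq_zero_on_right_half_plane_of_superexponential_decay
    ((diffContOnCl_superexpDamping ε).smul hf) ⟨1, one_lt_two, δ + B, ?_⟩ ?_ ⟨D, fun y => ?_⟩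
  · refine .of_bound C (eventually_inf_principal.2 (.of_forall fun s (hs : 0 < s.re) => ?_))
    rw [norm_smul, Real.norm_eq_abs, Real.abs_exp, Real.rpow_one, add_mul]
    refine mul_le_mul_exp_add (norm_nonneg _) ((hdamp s hs.le).trans ?_) (hgrowth s hs.le)
    gcongr
    exact Complex.abs_im_le_norm s
  · have hdom := ((superpolynomialDecay_exp_superexpDamping hε).mul_param_pow ⌈B⌉₊).const_mul C
    refine hdom.trans_eventually_abs_le ?_
    filter_upwards [eventually_ge_atTop 0] with x hx
    have hfx : ‖f x‖ ≤ C * Real.exp x ^ ⌈B⌉₊ := by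
      refine (hgrowth x hx).trans ?_
      rw [← Real.exp_nat_mul, Complex.norm_of_nonneg hx]
      gcongr
      exact Nat.le_ceil B
    calc |‖superexpDamping ε x • f x‖| = ‖superexpDamping ε x‖ * ‖f x‖ := by
          rw [abs_norm, norm_smul]
      _ ≤ ‖superexpDamping ε x‖ * (C * Real.exp x ^ ⌈B⌉₊) := by gcongr
      _ = C * (‖superexpDamping ε x‖ * Real.exp x ^ ⌈B⌉₊) := mul_left_comm ..
      _ ≤ |C * (‖superexpDamping ε x‖ * Real.exp x ^ ⌈B⌉₊)| := le_abs_self _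
  · rw [norm_smul]
    simpa using mul_le_mul_exp_add (norm_nonneg _) (hdamp (y * Complex.I) (by simp)) (hdecay y)

theorem eqOn_zero_of_exp_growth_lt_decay_on_imaginary_ray {f : ℂ → E} {b c C D : ℝ}
    (hf : DiffContOnCl ℂ f {s | 0 < s.re}) (hcb : c < b)
    (hgrowth : ∀ s : ℂ, 0 ≤ s.re → ‖f s‖ ≤ C * Real.exp (c * ‖s‖))
    (hdecay : ∀ y : ℝ, 0 < y → ‖f (y * Complex.I)‖ ≤ D * Real.exp (-(b * y))) :
    EqOn f 0 {s | 0 ≤ s.re} := by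
  -- On the imaginary axis `|exp (-i m s)| = exp (m y)`; the midpoint `m` turns the growth rate `c`
  -- on the lower half and the decay rate `b` on the upper half into the same decay rate `δ`.
  let m := (b + c) / 2
  let δ := (b - c) / 2
  let g : ℂ → E := fun s => Complex.exp (-(m * Complex.I * s)) • f s
  have hg (s : ℂ) : ‖g s‖ = Real.exp (m * s.im) * ‖f s‖ := by
    simp [g, norm_smul, Complex.norm_exp]
  have hg_im (y : ℝ) : ‖g (y * Complex.I)‖ = Real.exp (m * y) * ‖f (y * Complex.I)‖ := by
    simp [hg]
  have hg_growth (s : ℂ) (hs : 0 ≤ s.re) : ‖g s‖ ≤ C * Real.exp ((|m| + c) * ‖s‖) := by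
    have him : m * s.im ≤ |m| * ‖s‖ := (le_abs_self _).trans <| by
      rw [abs_mul]
      gcongr
      exact Complex.abs_im_le_norm s
    rw [hg, add_mul]
    exact mul_le_mul_exp_add (norm_nonneg _) (Real.exp_le_exp.2 him) (hgrowth s hs)
  have hg_nonpos (y : ℝ) (hy : y ≤ 0) : ‖g (y * Complex.I)‖ ≤ C * Real.exp (-(δ * |y|)) := by
    have hexp : -(δ * |y|) = m * y + c * ‖(y * Complex.I : ℂ)‖ := by
      simp only [norm_mul, Complex.norm_real, Real.norm_eq_abs, Complex.norm_I, abs_of_nonpos hy]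
      unfold m δ
      ring
    rw [hg_im, hexp]
    exact mul_le_mul_exp_add (norm_nonneg _) le_rfl (hgrowth _ (by simp))
  have hg_pos (y : ℝ) (hy : 0 < y) : ‖g (y * Complex.I)‖ ≤ D * Real.exp (-(δ * |y|)) := by
    have hexp : -(δ * |y|) = m * y + -(b * y) := by
      rw [abs_of_pos hy]
      unfold m δ
      ring
    rw [hg_im, hexp]
    exact mul_le_mul_exp_add (norm_nonneg _) le_rfl (hdecay y hy)
  have hg_zero : EqOn g 0 {s | 0 ≤ s.re} := by
    refine eqOn_zero_of_exp_decay_on_imaginary_axis (D := max C D)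
      (DiffContOnCl.smul (Differentiable.diffContOnCl (by fun_prop)) hf) hg_growth
      (half_pos (sub_pos.2 hcb)) fun y => ?_
    rcases le_or_gt y 0 with hy | hy
    · exact (hg_nonpos y hy).trans (by gcongr; exact le_max_left C D)
    · exact (hg_pos y hy).trans (by gcongr; exact le_max_right C D)
  exact fun s hs => (smul_eq_zero.1 (hg_zero hs)).resolve_left (Complex.exp_ne_zero _)

/-- The principal branch of `s ↦ s ^ (1 / q)`, rotated by `-π / (2 q)` so as to map the positive
imaginary axis onto the positive real axis. For `1 < q` the right half-plane goes to the sector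
`-π / q < arg z < 0`. -/
noncomputable def sectorMap (q : ℝ) (s : ℂ) : ℂ :=
  Complex.exp ((-(π / (2 * q)) : ℝ) * Complex.I) * s ^ ((q⁻¹ : ℝ) : ℂ)

lemma norm_sectorMap_rpow {q : ℝ} (hq : q ≠ 0) (s : ℂ) : ‖sectorMap q s‖ ^ q = ‖s‖ := by
  rw [sectorMap, norm_mul, Complex.norm_exp_ofReal_mul_I, one_mul, Complex.norm_cpow_real,
    Real.rpow_inv_rpow (norm_nonneg s) hq]

lemma sectorMap_mul_I (q : ℝ) {y : ℝ} (hy : 0 < y) :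
    sectorMap q (y * Complex.I) = (y ^ q⁻¹ : ℝ) := by
  rw [sectorMap, Complex.cpow_def_of_ne_zero (by simp [hy.ne']),
    Complex.log_ofReal_mul hy Complex.I_ne_zero, Complex.log_I, ← Complex.exp_add,
    Real.rpow_def_of_pos hy, Complex.ofReal_exp]
  congr 1
  push_cast
  ring

lemma diffContOnCl_sectorMap {q : ℝ} (hq : 0 < q) :
    DiffContOnCl ℂ (sectorMap q) {s | 0 < s.re} where
  differentiableOn s hs :=
    ((differentiableAt_id.cpow_const (.inl hs)).const_mul _).differentiableWithinAt
  continuousOn s hs := by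
    rw [Complex.closure_setOfPred_lt_re] at hs
    exact ((Complex.continuousAt_cpow_const_of_re_pos (.inl hs) (by simpa using hq)).const_mul
      _).continuousWithinAt

lemma eq_zero_of_forall_pos_eq_zero [CompleteSpace E] {F : ℂ → E} (hF : Differentiable ℂ F)
    (h : ∀ x : ℝ, 0 < x → F x = 0) : F = 0 := by
  have htendsto : Tendsto ((↑) : ℝ → ℂ) (𝓝[>] 0) (𝓝[≠] 0) :=
    tendsto_nhdsWithin_of_tendsto_nhds_of_eventually_within _
      ((Complex.continuous_ofReal.tendsto' 0 0 Complex.ofReal_zero).mono_left nhdsWithin_le_nhds)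
      (eventually_mem_nhdsWithin.mono fun x hx => Complex.ofReal_ne_zero.2 (ne_of_gt hx))
  exact AnalyticOnNhd.eq_of_frequently_eq (fun z _ => hF.analyticAt z)
    (fun _ _ => analyticAt_const)
    (htendsto.frequently
      (Eventually.frequently (f := 𝓝[>] (0 : ℝ)) (eventually_mem_nhdsWithin.mono h)))

theorem eq_zero_of_growth_lt_decay_on_positive_ray [CompleteSpace E] {F : ℂ → E}
    (hF : Differentiable ℂ F) {q b c C D : ℝ} (hq : 0 < q) (hcb : c < b)
    (hgrowth : ∀ z : ℂ, ‖F z‖ ≤ C * Real.exp (c * ‖z‖ ^ q))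
    (hdecay : ∀ x : ℝ, 0 < x → ‖F x‖ ≤ D * Real.exp (-(b * x ^ q))) : F = 0 := by
  have hzero : EqOn (F ∘ sectorMap q) 0 {s | 0 ≤ s.re} := by
    refine eqOn_zero_of_exp_growth_lt_decay_on_imaginary_ray (C := C) (D := D)
      (hF.comp_diffContOnCl (diffContOnCl_sectorMap hq)) hcb (fun s _ => ?_) fun y hy => ?_
    · simpa only [Function.comp_apply, norm_sectorMap_rpow hq.ne'] using hgrowth (sectorMap q s)
    · have hy' := hdecay (y ^ q⁻¹) (by positivity)
      rwa [← sectorMap_mul_I q hy, Real.rpow_inv_rpow hy.le hq.ne'] at hy'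
  refine eq_zero_of_forall_pos_eq_zero hF fun x hx => ?_
  have hx' := hzero (x := (x ^ q : ℝ) * Complex.I) (by simp)
  rwa [Function.comp_apply, sectorMap_mul_I q (by positivity),
    Real.rpow_rpow_inv hx.le hq.ne'] at hx'

theorem ae_eq_zero_of_fourier_eq_zero {V : Type*} [NormedAddCommGroup V] [InnerProductSpace ℝ V]
    [FiniteDimensional ℝ V] [MeasurableSpace V] [BorelSpace V] [CompleteSpace E] {f : V → E}
    (hf : Integrable f) (h : 𝓕 f = 0) : f =ᵐ[volume] 0 := by
  have hself_adjoint (ψ : 𝓢(V, ℂ)) : ∫ x, 𝓕 ψ x • f x = ∫ ξ, ψ ξ • 𝓕 f ξ := by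
    simpa only [flip_innerₗ] using! VectorFourier.integral_fourierIntegral_smul_eq_flip
      (L := innerₗ V) Real.continuous_fourierChar continuous_inner ψ.integrable hf
  have hpairing (φ : 𝓢(V, ℂ)) : ∫ x, φ x • f x = 0 :=
    calc ∫ x, φ x • f x = ∫ x, 𝓕 (𝓕⁻ φ) x • f x := by rw [FourierTransform.fourier_fourierInv_eq]
      _ = ∫ ξ, 𝓕⁻ φ ξ • 𝓕 f ξ := hself_adjoint (𝓕⁻ φ)
      _ = 0 := by simp only [h, Pi.zero_apply, smul_zero, integral_zero]
  refine ae_eq_zero_of_integral_contDiff_smul_eq_zero hf.locallyIntegrable fun g hg hg_supp => ?_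
  have hsmooth : ContDiff ℝ ∞ (Complex.ofRealCLM ∘ g) := by fun_prop
  have hsupp : HasCompactSupport (Complex.ofRealCLM ∘ g) := hg_supp.comp_left rfl
  simpa using hpairing (hsupp.toSchwartzMap hsmooth)

/-- The Fourier transform `∫ f(t) e^(-izt) dt` at a complex frequency `z`, without the factor `2π`
of Mathlib's `𝓕`. It takes the junk value `0` at `z` if the integrand is not integrable. -/
noncomputable def fourierLaplace (f : ℝ → E) (z : ℂ) : E :=
  ∫ t : ℝ, Complex.exp (-(Complex.I * z * t)) • f t

lemma fourier_eq_fourierLaplace (f : ℝ → E) (w : ℝ) :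
    𝓕 f w = fourierLaplace f (2 * π * w : ℝ) := by
  rw [Real.fourier_real_eq_integral_exp_smul, fourierLaplace]
  congr with t
  congr 2
  push_cast
  ring

lemma ae_eq_zero_of_fourierLaplace_eq_zero [CompleteSpace E] {f : ℝ → E} (hf : Integrable f)
    (h : fourierLaplace f = 0) : f =ᵐ[volume] 0 :=
  ae_eq_zero_of_fourier_eq_zero hf <| funext fun w => by
    rw [fourier_eq_fourierLaplace, h, Pi.zero_apply, Pi.zero_apply]

lemma norm_exp_neg_I_mul_le (z : ℂ) (t : ℝ) :
    ‖Complex.exp (-(Complex.I * z * t))‖ ≤ Real.exp (‖z‖ * |t|) := by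
  simpa using Complex.norm_exp_le_exp_norm (-(Complex.I * z * t))

theorem differentiable_fourierLaplace {f : ℝ → E} (hf : AEStronglyMeasurable f)
    (hint : ∀ R : ℝ, 0 ≤ R → Integrable fun t : ℝ => Real.exp (R * |t|) * ‖f t‖) :
    Differentiable ℂ (fourierLaplace f) := fun z => by
  have hmeas (w : ℂ) : AEStronglyMeasurable fun t : ℝ => Complex.exp (-(Complex.I * w * t)) • f t :=
    Continuous.aestronglyMeasurable (by fun_prop) |>.smul hf
  have hmeas_deriv : AEStronglyMeasurable fun t : ℝ =>
      (Complex.exp (-(Complex.I * z * t)) * -(Complex.I * t)) • f t :=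
    Continuous.aestronglyMeasurable (by fun_prop) |>.smul hf
  have hderiv (w : ℂ) (t : ℝ) : HasDerivAt (fun w => Complex.exp (-(Complex.I * w * t)) • f t)
      ((Complex.exp (-(Complex.I * w * t)) * -(Complex.I * t)) • f t) w := by
    have hexponent : HasDerivAt (fun w : ℂ => -(Complex.I * w * t)) (-(Complex.I * t)) w := by
      simpa using (((hasDerivAt_id w).const_mul Complex.I).mul_const (t : ℂ)).fun_neg
    exact hexponent.cexp.smul_const (f t)
  have hbound (w : ℂ) (hw : w ∈ Metric.ball z 1) (t : ℝ) :
      ‖(Complex.exp (-(Complex.I * w * t)) * -(Complex.I * t)) • f t‖ ≤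
        Real.exp ((‖z‖ + 2) * |t|) * ‖f t‖ := by
    have hwz : ‖w‖ ≤ ‖z‖ + 1 := by
      linarith [norm_le_norm_add_norm_sub' w z, mem_ball_iff_norm.1 hw]
    have ht : ‖-(Complex.I * (t : ℂ))‖ ≤ Real.exp |t| := by
      simpa using (le_add_of_nonneg_right zero_le_one).trans (Real.add_one_le_exp |t|)
    rw [norm_smul, norm_mul]
    gcongr
    calc ‖Complex.exp (-(Complex.I * w * t))‖ * ‖-(Complex.I * (t : ℂ))‖
        ≤ Real.exp ((‖z‖ + 1) * |t|) * Real.exp |t| := by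
          gcongr
          exact (norm_exp_neg_I_mul_le w t).trans (by gcongr)
      _ = Real.exp ((‖z‖ + 2) * |t|) := by rw [← Real.exp_add]; ring_nf
  refine (hasDerivAt_integral_of_dominated_loc_of_deriv_le (Metric.ball_mem_nhds z one_pos)
    (.of_forall hmeas) ((hint ‖z‖ (norm_nonneg z)).mono' (hmeas z) (.of_forall fun t => ?_))
    hmeas_deriv (.of_forall fun t w hw => hbound w hw t) (hint (‖z‖ + 2) (by positivity))
    (.of_forall fun t w _ => hderiv w t)).2.differentiableAt
  rw [norm_smul]
  gcongr
  exact norm_exp_neg_I_mul_le z t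

lemma integrable_exp_neg_mul_norm_rpow {V : Type*} [NormedAddCommGroup V] [NormedSpace ℝ V]
    [FiniteDimensional ℝ V] [MeasurableSpace V] [BorelSpace V] (μ : Measure V) [μ.IsAddHaarMeasure]
    {b p : ℝ} (hb : 0 < b) (hp : 0 < p) :
    Integrable (fun x : V => Real.exp (-(b * ‖x‖ ^ p))) μ := by
  rcases subsingleton_or_nontrivial V with hV | hV
  · exact .of_finite
  · rw [integrable_fun_norm_addHaar μ (f := fun r => Real.exp (-(b * r ^ p)))]
    simpa using integrableOn_rpow_mul_exp_neg_mul_rpow (s := (Module.finrank ℝ V - 1 : ℕ))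
      (neg_one_lt_zero.trans_le (Nat.cast_nonneg _)) hp hb

lemma exists_young_scale {p q α β : ℝ} (hp : 0 < p) (hq : 0 < q) (hα : 0 < α) (hβ : 0 < β)
    (h : 1 < (α * p) ^ (1 / p) * (β * q) ^ (1 / q)) :
    ∃ a > 0, a ^ p / p < α ∧ a⁻¹ ^ q / q < β := by
  have hαp : 0 < α * p := by positivity
  have hβq : 0 < β * q := by positivity
  rw [one_div, one_div] at h
  obtain ⟨a, hβa, haα⟩ : ∃ a, ((β * q) ^ q⁻¹)⁻¹ < a ∧ a < (α * p) ^ p⁻¹ :=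
    exists_between ((inv_lt_iff_one_lt_mul₀ (by positivity)).2 h)
  have ha : 0 < a := lt_trans (by positivity) hβa
  refine ⟨a, ha, ?_, ?_⟩
  · rwa [div_lt_iff₀ hp, ← Real.lt_rpow_inv_iff_of_pos ha.le hαp.le hp]
  · rw [div_lt_iff₀ hq, ← Real.lt_rpow_inv_iff_of_pos (by positivity) hβq.le hq]
    exact inv_lt_of_inv_lt₀ (by positivity) hβa

lemma mul_le_young_scale {p q a x y : ℝ} (hpq : p.HolderConjugate q) (ha : 0 < a) (hx : 0 ≤ x)
    (hy : 0 ≤ y) : x * y ≤ a ^ p / p * x ^ p + a⁻¹ ^ q / q * y ^ q :=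
  calc x * y = (a * x) * (a⁻¹ * y) := by field_simp
    _ ≤ (a * x) ^ p / p + (a⁻¹ * y) ^ q / q :=
      Real.young_inequality_of_nonneg (by positivity) (by positivity) hpq
    _ = a ^ p / p * x ^ p + a⁻¹ ^ q / q * y ^ q := by
      rw [Real.mul_rpow ha.le hx, Real.mul_rpow (by positivity) hy]
      ring

lemma exp_mul_le_of_young_scale {p q α a C r x R : ℝ} (hpq : p.HolderConjugate q) (ha : 0 < a)
    (hx : 0 ≤ x) (hR : 0 ≤ R) (hr₀ : 0 ≤ r) (hr : r ≤ C * Real.exp (-(α * x ^ p))) :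
    Real.exp (R * x) * r ≤
      C * Real.exp (a⁻¹ ^ q / q * R ^ q) * Real.exp (-((α - a ^ p / p) * x ^ p)) := by
  have hC : 0 ≤ C := nonneg_of_mul_nonneg_left (hr₀.trans hr) (Real.exp_pos _)
  calc Real.exp (R * x) * r ≤ C * Real.exp (R * x + -(α * x ^ p)) :=
        mul_le_mul_exp_add hr₀ le_rfl hr
    _ ≤ C * Real.exp (a⁻¹ ^ q / q * R ^ q + -((α - a ^ p / p) * x ^ p)) := by
      refine mul_le_mul_of_nonneg_left (Real.exp_le_exp.2 ?_) hC
      linarith [mul_le_young_scale hpq ha hx hR]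
    _ = C * Real.exp (a⁻¹ ^ q / q * R ^ q) * Real.exp (-((α - a ^ p / p) * x ^ p)) := by
      rw [Real.exp_add, mul_assoc]

lemma integrable_exp_mul_norm_mul_norm {V G : Type*} [NormedAddCommGroup V] [NormedSpace ℝ V]
    [FiniteDimensional ℝ V] [MeasurableSpace V] [BorelSpace V] {μ : Measure V} [μ.IsAddHaarMeasure]
    [NormedAddCommGroup G] {f : V → G} {p q α a C R : ℝ} (hf : AEStronglyMeasurable f μ)
    (hpq : p.HolderConjugate q) (ha : 0 < a) (haα : a ^ p / p < α)
    (hfd : ∀ᵐ x ∂μ, ‖f x‖ ≤ C * Real.exp (-(α * ‖x‖ ^ p))) (hR : 0 ≤ R) :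
    Integrable (fun x => Real.exp (R * ‖x‖) * ‖f x‖) μ := by
  refine ((integrable_exp_neg_mul_norm_rpow μ (sub_pos.2 haα) hpq.pos).const_mul
    (C * Real.exp (a⁻¹ ^ q / q * R ^ q))).mono' ?_ (hfd.mono fun x hx => ?_)
  · exact Continuous.aestronglyMeasurable (by fun_prop) |>.mul hf.norm
  · rw [norm_mul, norm_norm, Real.norm_eq_abs, Real.abs_exp]
    exact exp_mul_le_of_young_scale hpq ha (norm_nonneg x) hR (norm_nonneg (f x)) hx

lemma norm_fourierLaplace_le {f : ℝ → E} {p q α a C : ℝ} (hpq : p.HolderConjugate q)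
    (ha : 0 < a) (haα : a ^ p / p < α) (hfd : ∀ᵐ x, ‖f x‖ ≤ C * Real.exp (-(α * |x| ^ p))) (z : ℂ) :
    ‖fourierLaplace f z‖ ≤
      (C * ∫ t : ℝ, Real.exp (-((α - a ^ p / p) * |t| ^ p))) *
        Real.exp (a⁻¹ ^ q / q * ‖z‖ ^ q) := by
  rw [mul_right_comm, ← integral_const_mul]
  refine norm_integral_le_of_norm_le
    ((integrable_exp_neg_mul_norm_rpow volume (sub_pos.2 haα) hpq.pos).const_mul _)
    (hfd.mono fun t ht => ?_)
  refine le_trans ?_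
    (exp_mul_le_of_young_scale hpq ha (abs_nonneg t) (norm_nonneg z) (norm_nonneg (f t)) ht)
  rw [norm_smul]
  gcongr
  exact norm_exp_neg_I_mul_le z t

theorem morgan_theorem_R_general [CompleteSpace E] {f : ℝ → E} {p q α β C D : ℝ}
    (hf : AEStronglyMeasurable f) (hpq : p.HolderConjugate q) (hα : 0 < α) (hβ : 0 < β)
    (hαβ : 1 < (α * p) ^ (1 / p) * (β * q) ^ (1 / q))
    (hfd : ∀ᵐ x, ‖f x‖ ≤ C * Real.exp (-(α * |x| ^ p)))
    (hFd : ∀ l : ℝ, 0 < l → ‖fourierLaplace f l‖ ≤ D * Real.exp (-(β * l ^ q))) :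
    f =ᵐ[volume] 0 := by
  obtain ⟨a, ha, haα, haβ⟩ := exists_young_scale hpq.pos hpq.symm.pos hα hβ hαβ
  have hint (R : ℝ) (hR : 0 ≤ R) : Integrable fun t : ℝ => Real.exp (R * |t|) * ‖f t‖ :=
    integrable_exp_mul_norm_mul_norm hf hpq ha haα hfd hR
  have hf_int : Integrable f := (integrable_norm_iff hf).1 (by simpa using hint 0 le_rfl)
  exact ae_eq_zero_of_fourierLaplace_eq_zero hf_int <|
    eq_zero_of_growth_lt_decay_on_positive_ray (differentiable_fourierLaplace hf hint)
      hpq.symm.pos haβ (norm_fourierLaplace_le hpq ha haα hfd) hFd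

theorem morgan_theorem_R (f : ℝ → ℂ) (hf : Integrable f)
    (F : ℝ → ℂ)
    (hF : ∀ l : ℝ, F l = ∫ t : ℝ, f t * Complex.exp (-(Complex.I * l * t)))
    (p q α β C : ℝ) (hp : 1 < p) (hq : 1 < q) (hpq : 1 / p + 1 / q = 1)
    (hα : 0 < α) (hβ : 0 < β)
    (hαβ : 1 < (α * p) ^ (1 / p) * (β * q) ^ (1 / q))
    (hfd : ∀ x : ℝ, ‖f x‖ ≤ C * Real.exp (-(α * |x| ^ p)))
    (hFd : ∀ l : ℝ, ‖F l‖ ≤ C * Real.exp (-(β * |l| ^ q))) :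
    f =ᵐ[volume] 0 := by
  have hF_eq (l : ℝ) : F l = fourierLaplace f l := by
    simp only [hF, fourierLaplace, smul_eq_mul, mul_comm]
  refine morgan_theorem_R_general (D := C) hf.aestronglyMeasurable
    (Real.holderConjugate_iff.2 ⟨hp, by simpa only [one_div] using hpq⟩) hα hβ hαβ
    (.of_forall hfd) fun l hl => ?_
  simpa only [hF_eq, abs_of_pos hl] using hFd l
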